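/- arXiv:1907.03088 — 2 statements merged into one kernel-verified Lean document; each statement's English description precedes it below -/
import Mathlib

section
/- Let 0 < α < 1, ρ ∈ ℝ, t_i ≥ 0 and y_i ∈ ℝ. Then for every t > t_i, the Caputo fractional derivative with base point t_i of the function v(t) = E_{α,1}(ρ (t − t_i)^α) y_i satisfies ({}_{t_i}D_t^α v)(t) = ρ E_{α,1}(ρ (t − t_i)^α) y_i, i.e. (1/Γ(1−α)) ∫_{t_i}^t (t−s)^{−α} v'(s) ds = ρ E_{α,1}(ρ (t − t_i)^α) y_i. -/
/-!
The identity is proved term by term. The coefficients `1 / Γ(αj + 1)` decay faster than any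
geometric sequence (`summable_pow_div_Gamma`, from log-convexity of `Γ`), so `mlf α 1` may be
differentiated termwise (`hasDerivAt_mlf_one`); composing with `ρ (s - a)^α` gives
`v'(s) = ∑ ρ^(j+1) (s - a)^(α(j+1) - 1) / Γ(α(j+1))` for `s > a`. Against the kernel
`(t - s)^(-α)` each term is an Euler Beta integral (`integral_rpow_mul_rpow`),
with value `Γ(1 - α) ρ^(j+1) (t - a)^(αj) / Γ(αj + 1)`. The same computation with `|ρ|` in place
of `ρ` gives the `L¹` norms of the terms, whose summability justifies exchanging sum and integral.
-/

/-- The (real) Mittag-Leffler function `E_{α,β}(x) = ∑_{j=0}^∞ x^j / Γ(αj + β)`. -/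
noncomputable def mlf (α β x : ℝ) : ℝ := ∑' j : ℕ, x ^ j / Real.Gamma (α * j + β)

open Filter Topology MeasureTheory

/-- A Wendel-type inequality: log-convexity of `Γ` at `u + 1 = α (u + α) + (1 - α) (u + α + 1)`. -/
lemma Gamma_div_Gamma_add_le {α u : ℝ} (hα0 : 0 < α) (hα1 : α < 1) (hu : 0 < u) :
    Real.Gamma u / Real.Gamma (u + α) ≤ (u + α) ^ (1 - α) / u := by
  have hua : 0 < u + α := by positivity
  have h := Real.Gamma_mul_add_mul_le_rpow_Gamma_mul_rpow_Gamma (s := u + α) (t := u + α + 1)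
    hua (by positivity) hα0 (sub_pos.2 hα1) (by ring)
  have e : α * (u + α) + (1 - α) * (u + α + 1) = u + 1 := by ring
  have hG := Real.Gamma_pos_of_pos hua
  rw [e, Real.Gamma_add_one hu.ne', Real.Gamma_add_one hua.ne',
    Real.mul_rpow hua.le hG.le, mul_left_comm, ← Real.rpow_add hG, add_sub_cancel,
    Real.rpow_one] at h
  rw [div_le_div_iff₀ hG hu]
  linarith

lemma summable_pow_div_Gamma_of_pos {α R : ℝ} (hα0 : 0 < α) (hα1 : α < 1) (hR : 0 < R) :
    Summable fun j : ℕ => R ^ j / Real.Gamma (α * j + 1) := by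
  have hpos : ∀ j : ℕ, 0 < α * j + 1 := fun j => by positivity
  have hG : ∀ j : ℕ, 0 < Real.Gamma (α * j + 1) := fun j => Real.Gamma_pos_of_pos (hpos j)
  refine summable_of_ratio_test_tendsto_lt_one (l := 0) one_pos
    (Eventually.of_forall fun j => (div_pos (pow_pos hR j) (hG j)).ne') ?_
  have hlim : Tendsto (fun j : ℕ => R * 2 ^ (1 - α) * (α * j + 1) ^ (-α)) atTop (𝓝 0) := by
    have h1 : Tendsto (fun j : ℕ => α * (j : ℝ) + 1) atTop atTop :=
      tendsto_atTop_add_const_right _ _ (tendsto_natCast_atTop_atTop.const_mul_atTop hα0)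
    simpa using ((tendsto_rpow_neg_atTop hα0).comp h1).const_mul (R * 2 ^ (1 - α))
  refine squeeze_zero (fun j => by positivity) (fun j => ?_) hlim
  have hu := hpos j
  have hu1 : 1 ≤ α * j + 1 := by
    have : 0 ≤ α * (j : ℝ) := by positivity
    linarith
  rw [Real.norm_of_nonneg (div_pos (pow_pos hR _) (hG _)).le,
    Real.norm_of_nonneg (div_pos (pow_pos hR _) (hG _)).le]
  have hw := Gamma_div_Gamma_add_le hα0 hα1 hu
  have e : α * ((j + 1 : ℕ) : ℝ) + 1 = α * j + 1 + α := by push_cast; ring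
  have hG' : 0 < Real.Gamma (α * j + 1 + α) := Real.Gamma_pos_of_pos (by positivity)
  rw [e]
  generalize α * (j : ℝ) + 1 = u at *
  have hGu : Real.Gamma u ≠ 0 := (Real.Gamma_pos_of_pos hu).ne'
  calc R ^ (j + 1) / Real.Gamma (u + α) / (R ^ j / Real.Gamma u)
      = R * (Real.Gamma u / Real.Gamma (u + α)) := by rw [pow_succ]; field_simp
    _ ≤ R * ((u + α) ^ (1 - α) / u) := by gcongr
    _ ≤ R * ((2 * u) ^ (1 - α) / u) := by
        have : 0 ≤ 1 - α := by linarith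
        gcongr
        linarith
    _ = R * 2 ^ (1 - α) * u ^ (-α) := by
        rw [Real.mul_rpow (by norm_num) hu.le, sub_eq_add_neg, Real.rpow_add hu, Real.rpow_one]
        field_simp

lemma summable_pow_div_Gamma {α : ℝ} (hα0 : 0 < α) (hα1 : α < 1) (x : ℝ) :
    Summable fun j : ℕ => x ^ j / Real.Gamma (α * j + 1) := by
  refine Summable.of_norm_bounded
    (summable_pow_div_Gamma_of_pos hα0 hα1 (R := |x| + 1) (by positivity)) fun j => ?_
  have hG : 0 < Real.Gamma (α * j + 1) := Real.Gamma_pos_of_pos (by positivity)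
  rw [norm_div, norm_pow, Real.norm_of_nonneg hG.le, Real.norm_eq_abs]
  gcongr
  linarith

/-- Termwise differentiation: `E_{α,1}' = α⁻¹ E_{α,α}`. -/
lemma hasDerivAt_mlf_one {α : ℝ} (hα0 : 0 < α) (hα1 : α < 1) (x : ℝ) :
    HasDerivAt (mlf α 1) (∑' j : ℕ, x ^ j / (α * Real.Gamma (α * (j + 1)))) x := by
  set R : ℝ := |x| + 1 with hR
  have hR1 : 1 ≤ R := by simp [hR]
  have hG : ∀ j : ℕ, 0 < Real.Gamma (α * j + 1) := fun j => Real.Gamma_pos_of_pos (by positivity)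
  have hu := summable_pow_div_Gamma hα0 hα1 (2 * R)
  have hx : x ∈ Metric.ball (0 : ℝ) R := by simp [hR]
  have hb : ∀ (n : ℕ) (y : ℝ), y ∈ Metric.ball (0 : ℝ) R →
      ‖(n * y ^ (n - 1)) / Real.Gamma (α * n + 1)‖ ≤ (2 * R) ^ n / Real.Gamma (α * n + 1) := by
    intro n y hy
    have hy' : |y| ≤ R := by simpa using (Metric.mem_ball.1 hy).le
    rw [norm_div, norm_mul, norm_pow, Real.norm_of_nonneg (hG n).le, Real.norm_natCast,
      Real.norm_eq_abs, mul_pow]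
    have h2 : (n : ℝ) ≤ 2 ^ n := by exact_mod_cast Nat.lt_two_pow_self.le
    have h3 : |y| ^ (n - 1) ≤ R ^ n :=
      (pow_le_pow_left₀ (abs_nonneg y) hy' _).trans (pow_le_pow_right₀ hR1 (Nat.sub_le n 1))
    have := (hG n).le
    gcongr
  have hd := hasDerivAt_tsum_of_isPreconnected (g := fun (n : ℕ) (y : ℝ) =>
      y ^ n / Real.Gamma (α * n + 1))
    (g' := fun (n : ℕ) (y : ℝ) => (n * y ^ (n - 1)) / Real.Gamma (α * n + 1))
    hu Metric.isOpen_ball (convex_ball (0 : ℝ) R).isPreconnected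
    (fun n y _ => (hasDerivAt_pow n y).div_const _) hb hx
    (summable_pow_div_Gamma hα0 hα1 x) hx
  have hs : Summable fun n : ℕ => (n * x ^ (n - 1)) / Real.Gamma (α * n + 1) :=
    Summable.of_norm_bounded hu fun n => hb n x hx
  refine hd.congr_deriv ?_
  rw [hs.tsum_eq_zero_add]
  simp only [Nat.cast_zero, zero_mul, zero_div, zero_add, Nat.add_sub_cancel]
  refine tsum_congr fun j => ?_
  have hj : 0 < α * ((j : ℝ) + 1) := by positivity
  have hGj := (Real.Gamma_pos_of_pos hj).ne'
  push_cast
  rw [Real.Gamma_add_one hj.ne']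
  field_simp

/-- Euler's Beta integral over `[a, t]`, in real form. -/
lemma integral_rpow_mul_rpow {a t p q : ℝ} (hat : a < t) (hp : 0 < p) (hq : 0 < q) :
    ∫ s in a..t, (t - s) ^ (q - 1) * (s - a) ^ (p - 1) =
      (t - a) ^ (p + q - 1) * (Real.Gamma p * Real.Gamma q / Real.Gamma (p + q)) := by
  have hL : 0 < t - a := sub_pos.2 hat
  have h := Complex.betaIntegral_scaled p q hL
  rw [Complex.betaIntegral_eq_Gamma_mul_div _ _ (by simpa) (by simpa)] at h
  have hshift : ∫ s in a..t, (t - s) ^ (q - 1) * (s - a) ^ (p - 1) =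
      ∫ x in (0 : ℝ)..(t - a), x ^ (p - 1) * ((t - a) - x) ^ (q - 1) := by
    rw [← sub_self a, ← intervalIntegral.integral_comp_sub_right
      (fun x => x ^ (p - 1) * ((t - a) - x) ^ (q - 1)) a]
    refine intervalIntegral.integral_congr fun s _ => ?_
    simp [mul_comm]
  rw [hshift]
  apply Complex.ofReal_injective
  rw [← intervalIntegral.integral_ofReal]
  have hcongr : ∫ x in (0 : ℝ)..(t - a),
      ((x ^ (p - 1) * ((t - a) - x) ^ (q - 1) : ℝ) : ℂ) =
      ∫ x in (0 : ℝ)..(t - a), (x : ℂ) ^ ((p : ℂ) - 1) * (((t - a : ℝ) : ℂ) - x) ^ ((q : ℂ) - 1) := by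
    refine intervalIntegral.integral_congr fun x hx => ?_
    rw [Set.uIcc_of_le hL.le] at hx
    rw [Complex.ofReal_mul, Complex.ofReal_cpow hx.1, Complex.ofReal_cpow (sub_nonneg.2 hx.2)]
    push_cast
    rfl
  rw [hcongr, h, Complex.ofReal_mul, Complex.ofReal_cpow hL.le]
  simp [← Complex.Gamma_ofReal]

lemma intervalIntegrable_rpow_mul_rpow {a t p q : ℝ} (hat : a < t) (hp : 0 < p) (hq : 0 < q) :
    IntervalIntegrable (fun s => (t - s) ^ (q - 1) * (s - a) ^ (p - 1)) volume a t := by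
  -- A non-integrable function has integral `0`, whereas the Beta integral is positive.
  refine intervalIntegral.intervalIntegrable_of_integral_ne_zero ?_
  rw [integral_rpow_mul_rpow hat hp hq]
  have := Real.Gamma_pos_of_pos hp
  have := Real.Gamma_pos_of_pos hq
  have := Real.Gamma_pos_of_pos (add_pos hp hq)
  have := Real.rpow_pos_of_pos (sub_pos.2 hat) (p + q - 1)
  positivity

lemma hasDerivAt_mlf_comp {α : ℝ} (hα0 : 0 < α) (hα1 : α < 1) (ρ : ℝ) {a s : ℝ} (has : a < s) :
    HasDerivAt (fun r : ℝ => mlf α 1 (ρ * (r - a) ^ α))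
      (∑' j : ℕ, ρ ^ (j + 1) / Real.Gamma (α * (j + 1)) * (s - a) ^ (α * (j + 1) - 1)) s := by
  have h0 : 0 < s - a := sub_pos.2 has
  have hin : HasDerivAt (fun r : ℝ => ρ * (r - a) ^ α) (ρ * (1 * α * (s - a) ^ (α - 1))) s :=
    (((hasDerivAt_id s).sub_const a).rpow_const (Or.inl h0.ne')).const_mul ρ
  refine ((hasDerivAt_mlf_one hα0 hα1 _).comp s hin).congr_deriv ?_
  rw [← tsum_mul_right]
  refine tsum_congr fun j => ?_
  have hGj := (Real.Gamma_pos_of_pos (show 0 < α * ((j : ℝ) + 1) by positivity)).ne'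
  have e : (s - a) ^ (α * (j + 1) - 1) = ((s - a) ^ α) ^ j * (s - a) ^ (α - 1) := by
    rw [← Real.rpow_mul_natCast h0.le, ← Real.rpow_add h0]
    ring_nf
  rw [e, mul_pow, pow_succ ρ]
  field_simp

/-- The Caputo integral of the `j`-th term of the differentiated series, for any parameter `c`. -/
lemma integral_term {α : ℝ} (hα0 : 0 < α) (hα1 : α < 1) (c : ℝ) {a t : ℝ} (hat : a < t) (j : ℕ) :
    ∫ s in a..t, (t - s) ^ (-α) *
        (c ^ (j + 1) / Real.Gamma (α * (j + 1)) * (s - a) ^ (α * (j + 1) - 1)) =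
      Real.Gamma (1 - α) * c * ((c * (t - a) ^ α) ^ j / Real.Gamma (α * j + 1)) := by
  have hp : 0 < α * ((j : ℝ) + 1) := by positivity
  have h := integral_rpow_mul_rpow hat hp (sub_pos.2 hα1)
  have e1 : 1 - α - 1 = -α := by ring
  have e2 : α * ((j : ℝ) + 1) + (1 - α) = α * j + 1 := by ring
  rw [e1, e2, add_sub_cancel_right, Real.rpow_mul_natCast (sub_pos.2 hat).le] at h
  simp_rw [mul_left_comm ((t - _) ^ (-α))]
  rw [intervalIntegral.integral_const_mul, h, mul_pow, pow_succ]
  have := (Real.Gamma_pos_of_pos hp).ne'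
  field_simp

/-- For `0 < α < 1`, `ρ ∈ ℝ`, `t_i ≥ 0`, `y_i ∈ ℝ` and every `t > t_i`,
the Caputo derivative with base point `t_i` of `v(t) = E_{α,1}(ρ (t − t_i)^α) y_i`
satisfies `({}_{t_i}D_t^α v)(t) = ρ E_{α,1}(ρ (t − t_i)^α) y_i`. -/
theorem caputo_shifted_mittagLeffler {α ρ ti yi : ℝ} (hα0 : 0 < α) (hα1 : α < 1)
    (hti : 0 ≤ ti) {t : ℝ} (ht : ti < t) :
    (1 / Real.Gamma (1 - α)) *
        ∫ s in ti..t, (t - s) ^ (-α) *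
          deriv (fun r : ℝ => mlf α 1 (ρ * (r - ti) ^ α) * yi) s =
      ρ * (mlf α 1 (ρ * (t - ti) ^ α) * yi) := by
  set F : ℕ → ℝ → ℝ := fun j s => (t - s) ^ (-α) *
    (ρ ^ (j + 1) / Real.Gamma (α * (j + 1)) * (s - ti) ^ (α * (j + 1) - 1)) with hF
  have hGj : ∀ j : ℕ, 0 < Real.Gamma (α * ((j : ℝ) + 1)) := fun j =>
    Real.Gamma_pos_of_pos (by positivity)
  have hint : ∀ j, Integrable (F j) (volume.restrict (Set.Ioc ti t)) := by
    intro j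
    have h := intervalIntegrable_rpow_mul_rpow ht (p := α * ((j : ℝ) + 1)) (by positivity)
      (sub_pos.2 hα1)
    rw [show 1 - α - 1 = -α by ring] at h
    have h' := h.const_mul (ρ ^ (j + 1) / Real.Gamma (α * (j + 1)))
    rw [intervalIntegrable_iff_integrableOn_Ioc_of_le ht.le] at h'
    refine h'.congr (ae_of_all _ fun s => ?_)
    simp only [hF]
    ring
  have hnorm : ∀ j, ∫ s in Set.Ioc ti t, ‖F j s‖ =
      Real.Gamma (1 - α) * |ρ| * ((|ρ| * (t - ti) ^ α) ^ j / Real.Gamma (α * j + 1)) := by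
    intro j
    rw [← integral_term hα0 hα1 |ρ| ht j, intervalIntegral.integral_of_le ht.le]
    refine setIntegral_congr_fun measurableSet_Ioc fun s hs => ?_
    have h1 : 0 ≤ t - s := sub_nonneg.2 hs.2
    have h2 : 0 ≤ s - ti := sub_nonneg.2 hs.1.le
    simp only [hF, norm_mul, norm_div, norm_pow, Real.norm_eq_abs,
      abs_of_nonneg (Real.rpow_nonneg h1 _), abs_of_nonneg (Real.rpow_nonneg h2 _),
      abs_of_pos (hGj j)]
  have hsum : Summable fun j => ∫ s in Set.Ioc ti t, ‖F j s‖ := by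
    simp_rw [hnorm]
    exact (summable_pow_div_Gamma hα0 hα1 _).mul_left _
  have hswap := (hasSum_integral_of_summable_integral_norm hint hsum).tsum_eq
  have hderiv : ∫ s in ti..t, (t - s) ^ (-α) *
      deriv (fun r : ℝ => mlf α 1 (ρ * (r - ti) ^ α) * yi) s =
      (∫ s in Set.Ioc ti t, ∑' j, F j s) * yi := by
    rw [intervalIntegral.integral_of_le ht.le, ← integral_mul_const]
    refine setIntegral_congr_fun measurableSet_Ioc fun s hs => ?_
    simp only [hF]
    rw [((hasDerivAt_mlf_comp hα0 hα1 ρ hs.1).mul_const yi).deriv, tsum_mul_left, mul_assoc]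
  have hterm : ∀ j, ∫ s in Set.Ioc ti t, F j s =
      Real.Gamma (1 - α) * ρ * ((ρ * (t - ti) ^ α) ^ j / Real.Gamma (α * j + 1)) := by
    intro j
    rw [← integral_term hα0 hα1 ρ ht j, intervalIntegral.integral_of_le ht.le]
  rw [hderiv, ← hswap]
  simp_rw [hterm]
  rw [tsum_mul_left, ← mlf]
  have := (Real.Gamma_pos_of_pos (sub_pos.2 hα1)).ne'
  field_simp
end

section
/- Let ρ, x₀, y₁ ∈ ℝ and 0 < t₁ < T. Define x : [0,T] → ℝ piecewise by x(t) = E_{2/3,1}(ρ t^{2/3}) x₀ + ∫_0^t (t−θ)^{−1/3} E_{2/3,2/3}(ρ (t−θ)^{2/3}) θ dθ for t ∈ [0,t₁], and x(t) = E_{2/3,1}(ρ (t−t₁)^{2/3}) [x(t₁) + y₁] + ∫_{t₁}^t (t−θ)^{−1/3} E_{2/3,2/3}(ρ (t−θ)^{2/3}) θ dθ for t ∈ (t₁,T]. Then for every t ∈ (t₁,T], (1/Γ(1/3)) ∫_0^t (t−s)^{−2/3} x'(s) ds = ρ x(t) + t + H(t), where x' denotes the piecewise derivative of x (which exists for all s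 ∈ (0,t) with s ≠ t₁) and H(t) = (1/Γ(1/3)) ∫_0^{t₁} (t−s)^{−2/3} x'(s) ds. -/
open MeasureTheory Set Filter Topology

/-! ### Convergence and continuity of the Mittag-Leffler series -/

/-- Superexponential growth of `Γ`, read off from the part of Euler's integral over
`(R, R + 1]`. -/
theorem Gamma_lower_bound {R y : ℝ} (hR : 1 ≤ R) (hy : 1 ≤ y) :
    Real.exp (-(R + 1)) * R ^ (y - 1) ≤ Real.Gamma y := by
  have hint := Real.GammaIntegral_convergent (s := y) (by linarith)
  rw [Real.Gamma_eq_integral (by linarith)]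
  have hsub : Ioc R (R + 1) ⊆ Ioi (0 : ℝ) := fun s hs => lt_trans (by linarith) hs.1
  calc Real.exp (-(R + 1)) * R ^ (y - 1)
      = ∫ _ in Ioc R (R + 1), Real.exp (-(R + 1)) * R ^ (y - 1) := by simp
    _ ≤ ∫ s in Ioc R (R + 1), Real.exp (-s) * s ^ (y - 1) := by
        refine setIntegral_mono_on (integrableOn_const (by simp)) (hint.mono_set hsub)
          measurableSet_Ioc fun s hs => ?_
        have h1 : Real.exp (-(R + 1)) ≤ Real.exp (-s) := Real.exp_le_exp.2 (by linarith [hs.2])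
        have h2 : R ^ (y - 1) ≤ s ^ (y - 1) :=
          Real.rpow_le_rpow (by linarith) hs.1.le (by linarith)
        have : (0 : ℝ) ≤ R ^ (y - 1) := Real.rpow_nonneg (by linarith) _
        gcongr
    _ ≤ _ := by
        refine setIntegral_mono_set hint ?_ hsub.eventuallyLE
        filter_upwards [ae_restrict_mem measurableSet_Ioi] with s hs
        exact mul_nonneg (Real.exp_pos _).le (Real.rpow_nonneg (le_of_lt hs) _)

theorem summable_mlf {β : ℝ} (hβ : 0 < β) (x : ℝ) :
    Summable fun j : ℕ => x ^ j / Real.Gamma (2 / 3 * j + β) := by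
  -- With `R ^ (2/3) = 2 (|x| + 1)`, `Γ(2j/3 + β)` is at least a constant times
  -- `(2 (|x| + 1)) ^ j`, so the terms are `O(2⁻ʲ)`.
  set q : ℝ := 2 * (|x| + 1) with hq
  have hx0 := abs_nonneg x
  have hq1 : 1 ≤ q := by linarith
  set R : ℝ := q ^ (3 / 2 : ℝ) with hRdef
  have hR1 : 1 ≤ R := Real.one_le_rpow hq1 (by norm_num)
  have hR0 : 0 < R := by linarith
  have hRq : R ^ (2 / 3 : ℝ) = q := by
    rw [hRdef, ← Real.rpow_mul (by linarith)]; norm_num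
  refine Summable.of_norm_bounded_eventually_nat
    (g := fun j : ℕ => Real.exp (R + 1) * R ^ (1 - β) * (1 / 2 : ℝ) ^ j)
    (summable_geometric_two.mul_left _) ?_
  filter_upwards [eventually_ge_atTop 2] with j hj
  have hj' : (2 : ℝ) ≤ j := by exact_mod_cast hj
  have hG := Gamma_lower_bound (y := 2 / 3 * j + β) hR1 (by linarith)
  have hpow : R ^ (2 / 3 * j + β - 1) = q ^ j * R ^ (β - 1) := by
    rw [add_sub_assoc, Real.rpow_add hR0, Real.rpow_mul hR0.le, hRq, Real.rpow_natCast]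
  rw [hpow] at hG
  have hRβ : 0 < R ^ (β - 1) := Real.rpow_pos_of_pos hR0 _
  have hpos : 0 < Real.exp (-(R + 1)) * (q ^ j * R ^ (β - 1)) := by positivity
  rw [norm_div, norm_pow, Real.norm_eq_abs, Real.norm_eq_abs,
    abs_of_pos (hpos.trans_le hG), div_le_iff₀ (hpos.trans_le hG)]
  have h1 : R ^ (1 - β) * R ^ (β - 1) = 1 := by
    rw [← Real.rpow_add hR0]; simp
  have h2 : Real.exp (R + 1) * Real.exp (-(R + 1)) = 1 := by
    rw [← Real.exp_add]; simp
  have h3 : |x| ^ j ≤ (1 / 2 : ℝ) ^ j * q ^ j := by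
    rw [← mul_pow]
    exact pow_le_pow_left₀ hx0 (by linarith) j
  calc |x| ^ j ≤ (1 / 2 : ℝ) ^ j * q ^ j := h3
    _ = Real.exp (R + 1) * R ^ (1 - β) * (1 / 2 : ℝ) ^ j *
        (Real.exp (-(R + 1)) * (q ^ j * R ^ (β - 1))) := by
      linear_combination (-(1 / 2 : ℝ) ^ j * q ^ j) * (h1 + R ^ (1 - β) * R ^ (β - 1) * h2)
    _ ≤ _ := by gcongr

theorem continuous_mlf {β : ℝ} (hβ : 0 < β) : Continuous (mlf (2 / 3) β) := by
  refine continuous_iff_continuousAt.2 fun x => ?_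
  have h : ContinuousOn (mlf (2 / 3) β) (Metric.ball 0 (|x| + 1)) := by
    refine continuousOn_tsum (fun j => by fun_prop) (summable_mlf hβ (|x| + 1)) ?_
    intro j y hy
    have hG : 0 < Real.Gamma (2 / 3 * j + β) := Real.Gamma_pos_of_pos (by positivity)
    rw [norm_div, norm_pow, Real.norm_of_nonneg hG.le]
    rw [mem_ball_zero_iff] at hy
    gcongr
  exact h.continuousAt (Metric.isOpen_ball.mem_nhds (by simp))

/-! ### Fractional integrals of Mittag-Leffler kernels -/

/-- Euler's beta integral, rescaled to `[0, u]`. -/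
theorem integral_beta_kernel {s p u : ℝ} (hs : 0 < s) (hp : 0 < p) (hu : 0 < u) :
    ∫ v in (0 : ℝ)..u, (u - v) ^ (p - 1) * v ^ (s - 1) =
      u ^ (s + p - 1) * (Real.Gamma s * Real.Gamma p / Real.Gamma (s + p)) := by
  have h := Complex.betaIntegral_scaled s p hu
  rw [Complex.betaIntegral_eq_Gamma_mul_div s p (by simpa) (by simpa)] at h
  have h' : ∫ v in (0 : ℝ)..u, (v : ℂ) ^ ((s : ℂ) - 1) * ((u : ℂ) - v) ^ ((p : ℂ) - 1) =
      ((∫ v in (0 : ℝ)..u, (u - v) ^ (p - 1) * v ^ (s - 1) : ℝ) : ℂ) := by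
    rw [← intervalIntegral.integral_ofReal]
    refine intervalIntegral.integral_congr fun v hv => ?_
    rw [uIcc_of_le hu.le] at hv
    have e1 := Complex.ofReal_cpow hv.1 (s - 1)
    have e2 := Complex.ofReal_cpow (sub_nonneg.2 hv.2) (p - 1)
    push_cast at e1 e2 ⊢
    rw [e1, e2, mul_comm]
  rw [h'] at h
  have e3 := Complex.ofReal_cpow hu.le (s + p - 1)
  push_cast at e3
  rw [← e3, ← Complex.ofReal_add, Complex.Gamma_ofReal, Complex.Gamma_ofReal,
    Complex.Gamma_ofReal] at h
  exact_mod_cast h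

theorem intervalIntegrable_beta_kernel {s p u : ℝ} (hs : 0 < s) (hp : 0 < p) (hu : 0 < u) :
    IntervalIntegrable (fun v : ℝ => (u - v) ^ (p - 1) * v ^ (s - 1)) volume 0 u := by
  -- A function with nonzero Bochner integral is integrable.
  by_contra hcon
  have h := integral_beta_kernel hs hp hu
  rw [intervalIntegral.integral_undef hcon] at h
  have h1 := Real.Gamma_pos_of_pos hs
  have h2 := Real.Gamma_pos_of_pos hp
  have h3 := Real.Gamma_pos_of_pos (add_pos hs hp)
  have h4 : 0 < u ^ (s + p - 1) := Real.rpow_pos_of_pos hu _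
  have : 0 < u ^ (s + p - 1) * (Real.Gamma s * Real.Gamma p / Real.Gamma (s + p)) := by
    positivity
  linarith

/-- The kernel `u ^ (β - 1) * E_{2/3, β}(ρ u ^ (2/3))`. -/
noncomputable def mlKernel (ρ β u : ℝ) : ℝ :=
  u ^ (β - 1) * mlf (2 / 3) β (ρ * u ^ ((2 : ℝ) / 3))

theorem intervalIntegrable_mlKernel_conv (ρ : ℝ) {β p u : ℝ} (hβ : 0 < β) (hp : 0 < p)
    (hu : 0 < u) :
    IntervalIntegrable (fun v => (u - v) ^ (p - 1) * mlKernel ρ β v) volume 0 u := by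
  have hc : Continuous fun v : ℝ => mlf (2 / 3) β (ρ * v ^ ((2 : ℝ) / 3)) :=
    (continuous_mlf hβ).comp (continuous_const.mul
      (Real.continuous_rpow_const (by norm_num)))
  simpa only [mlKernel, mul_assoc] using
    (intervalIntegrable_beta_kernel hβ hp hu).mul_continuousOn hc.continuousOn

/-- The Riemann–Liouville integral of order `p` raises the second index of the kernel by `p`:
termwise integration of the power series, each term being a beta integral. -/
theorem integral_mlKernel_conv (ρ : ℝ) {β p u : ℝ} (hβ : 0 < β) (hp : 0 < p) (hu : 0 < u) :
    ∫ v in (0 : ℝ)..u, (u - v) ^ (p - 1) * mlKernel ρ β v =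
      Real.Gamma p * mlKernel ρ (β + p) u := by
  let F : ℕ → ℝ → ℝ := fun j v => ρ ^ j / Real.Gamma (2 / 3 * j + β) *
    ((u - v) ^ (p - 1) * v ^ (2 / 3 * j + β - 1))
  have hsj (j : ℕ) : 0 < 2 / 3 * (j : ℝ) + β := by positivity
  have hpow (j : ℕ) {v b : ℝ} (hv : 0 < v) :
      v ^ (2 / 3 * (j : ℝ) + b - 1) = (v ^ ((2 : ℝ) / 3)) ^ j * v ^ (b - 1) := by
    rw [add_sub_assoc, Real.rpow_add hv, Real.rpow_mul hv.le, Real.rpow_natCast]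
  have hFint (j : ℕ) : Integrable (F j) (volume.restrict (Ioc 0 u)) :=
    (((intervalIntegrable_iff_integrableOn_Ioc_of_le hu.le).1
      (intervalIntegrable_beta_kernel (hsj j) hp hu)).const_mul _ : )
  have hker (c : ℝ) (j : ℕ) : ∫ v in Ioc 0 u, c ^ j / Real.Gamma (2 / 3 * j + β) *
      ((u - v) ^ (p - 1) * v ^ (2 / 3 * j + β - 1)) =
      Real.Gamma p * u ^ (β + p - 1) *
        ((c * u ^ ((2 : ℝ) / 3)) ^ j / Real.Gamma (2 / 3 * j + (β + p))) := by
    rw [integral_const_mul, ← intervalIntegral.integral_of_le hu.le,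
      integral_beta_kernel (hsj j) hp hu, add_assoc, hpow j hu, mul_pow]
    have := (Real.Gamma_pos_of_pos (hsj j)).ne'
    have := (Real.Gamma_pos_of_pos (add_pos (hsj j) hp)).ne'
    rw [add_assoc] at this
    field_simp
  have hFnorm (j : ℕ) : ∫ v in Ioc 0 u, ‖F j v‖ = Real.Gamma p * u ^ (β + p - 1) *
        ((|ρ| * u ^ ((2 : ℝ) / 3)) ^ j / Real.Gamma (2 / 3 * j + (β + p))) := by
    rw [← hker]
    refine setIntegral_congr_fun measurableSet_Ioc fun v hv => ?_
    have h1 : 0 ≤ (u - v) ^ (p - 1) := Real.rpow_nonneg (sub_nonneg.2 hv.2) _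
    have h2 : 0 ≤ v ^ (2 / 3 * (j : ℝ) + β - 1) := Real.rpow_nonneg hv.1.le _
    have h3 := Real.Gamma_pos_of_pos (hsj j)
    simp only [F, Real.norm_eq_abs, abs_mul, abs_div, abs_pow, abs_of_nonneg h1,
      abs_of_nonneg h2, abs_of_pos h3]
  have hsum : Summable fun j => ∫ v in Ioc 0 u, ‖F j v‖ := by
    simp_rw [hFnorm]
    exact (summable_mlf (add_pos hβ hp) _).mul_left _
  have h := (integral_tsum_of_summable_integral_norm hFint hsum)
  rw [intervalIntegral.integral_of_le hu.le]
  have hR : ∫ v in Ioc 0 u, (u - v) ^ (p - 1) * mlKernel ρ β v =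
      ∫ v in Ioc 0 u, ∑' j, F j v := by
    refine setIntegral_congr_fun measurableSet_Ioc fun v hv => ?_
    simp only [mlKernel, mlf, F, ← tsum_mul_left]
    refine tsum_congr fun j => ?_
    rw [hpow j hv.1, mul_pow]
    ring
  rw [hR, ← h]
  simp_rw [F, hker]
  rw [tsum_mul_left, mlKernel, mlf, mul_assoc]

theorem mlKernel_zero (ρ : ℝ) {β : ℝ} (hβ : 1 < β) : mlKernel ρ β 0 = 0 := by
  rw [mlKernel, Real.zero_rpow (by linarith), zero_mul]

theorem intervalIntegrable_mlKernel (ρ : ℝ) {β u : ℝ} (hβ : 0 < β) (hu : 0 ≤ u) :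
    IntervalIntegrable (mlKernel ρ β) volume 0 u := by
  rcases hu.eq_or_lt with rfl | hu
  · simp
  · simpa using intervalIntegrable_mlKernel_conv ρ hβ one_pos hu

theorem hasDerivAt_mlKernel (ρ : ℝ) {β u : ℝ} (hβ : 0 < β) (hu : 0 < u) :
    HasDerivAt (mlKernel ρ (β + 1)) (mlKernel ρ β u) u := by
  have hcont : ContinuousOn (mlKernel ρ β) (Ioi 0) := by
    refine ContinuousOn.mul (fun v hv => ?_) ?_
    · exact (Real.continuousAt_rpow_const _ _ (Or.inl (ne_of_gt hv))).continuousWithinAt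
    · exact ((continuous_mlf hβ).comp (continuous_const.mul
        (Real.continuous_rpow_const (by norm_num)))).continuousOn
  have h := intervalIntegral.integral_hasDerivAt_right
    (intervalIntegrable_mlKernel ρ hβ hu.le)
    (hcont.stronglyMeasurableAtFilter isOpen_Ioi u hu)
    (hcont.continuousAt (Ioi_mem_nhds hu))
  refine h.congr_of_eventuallyEq ?_
  filter_upwards [Ioi_mem_nhds hu] with w hw
  simpa using (integral_mlKernel_conv ρ hβ one_pos hw).symm

/-- `E_{2/3,1}(y) = 1 + y E_{2/3,5/3}(y)`, the shift of the power series by one index. -/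
theorem mlf_one_eq (y : ℝ) : mlf (2 / 3) 1 y = 1 + y * mlf (2 / 3) (2 / 3 + 1) y := by
  rw [mlf, (summable_mlf one_pos y).tsum_eq_zero_add, mlf, ← tsum_mul_left]
  congr 1
  · simp
  · refine tsum_congr fun j => ?_
    rw [pow_succ']
    push_cast
    rw [mul_div_assoc]
    congr 3
    ring

/-- The left side is the kernel of index `1`. -/
theorem mlKernel_one_eq (ρ u : ℝ) :
    mlf (2 / 3) 1 (ρ * u ^ ((2 : ℝ) / 3)) = 1 + ρ * mlKernel ρ (2 / 3 + 1) u := by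
  rw [mlf_one_eq, mlKernel, add_sub_cancel_right]
  ring

/-! ### Mild solutions -/

/-- Closed form of the forced part of the mild solution based at `a`. -/
theorem integral_forcing (ρ a : ℝ) {s : ℝ} (hs : a ≤ s) :
    ∫ θ in a..s, (s - θ) ^ (-(1:ℝ)/3) * mlf (2/3) (2/3) (ρ * (s - θ) ^ ((2:ℝ)/3)) * θ =
      a * mlKernel ρ (2 / 3 + 1) (s - a) + mlKernel ρ (2 / 3 + 2) (s - a) := by
  rcases hs.eq_or_lt with rfl | hs
  · rw [sub_self, mlKernel_zero ρ (by norm_num), mlKernel_zero ρ (by norm_num)]; simp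
  have hu : 0 < s - a := sub_pos.2 hs
  have h1 := integral_mlKernel_conv ρ (β := 2 / 3) (p := 1) (by norm_num) one_pos hu
  have h2 := integral_mlKernel_conv ρ (β := 2 / 3) (p := 2) (by norm_num) two_pos hu
  have i1 := intervalIntegrable_mlKernel_conv ρ (β := 2 / 3) (p := 1) (by norm_num) one_pos hu
  have i2 := intervalIntegrable_mlKernel_conv ρ (β := 2 / 3) (p := 2) (by norm_num) two_pos hu
  have hg : Real.Gamma 2 = 1 := Real.Gamma_two
  rw [Real.Gamma_one, one_mul] at h1
  rw [hg, one_mul] at h2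
  have hsub := intervalIntegral.integral_comp_sub_left (a := a) (b := s)
    (fun v => mlKernel ρ (2 / 3) v * (s - v)) s
  rw [sub_self] at hsub
  calc _ = ∫ θ in a..s, mlKernel ρ (2 / 3) (s - θ) * (s - (s - θ)) := by
        refine intervalIntegral.integral_congr fun θ _ => ?_
        simp only [mlKernel, sub_sub_cancel]
        norm_num
    _ = ∫ v in (0 : ℝ)..(s - a), mlKernel ρ (2 / 3) v * (s - v) := hsub
    _ = ∫ v in (0 : ℝ)..(s - a), (a * ((s - a - v) ^ ((1 : ℝ) - 1) * mlKernel ρ (2 / 3) v) +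
          (s - a - v) ^ ((2 : ℝ) - 1) * mlKernel ρ (2 / 3) v) := by
        refine intervalIntegral.integral_congr fun v _ => ?_
        have : (2 : ℝ) - 1 = 1 := by norm_num
        simp only [this, sub_self, Real.rpow_zero, Real.rpow_one]
        ring
    _ = _ := by
        rw [intervalIntegral.integral_add (i1.const_mul a) i2,
          intervalIntegral.integral_const_mul, h1, h2]

/-- The mild solution with base point `a` and initial value `c` for the forcing term `t ↦ t`,
written through the kernels `mlKernel`. -/
noncomputable def mildSol (ρ a c s : ℝ) : ℝ :=
  c + (ρ * c + a) * mlKernel ρ (2 / 3 + 1) (s - a) + mlKernel ρ (2 / 3 + 2) (s - a)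

theorem mildSol_eq (ρ a c : ℝ) {s : ℝ} (hs : a ≤ s) :
    mlf (2/3) 1 (ρ * (s - a) ^ ((2:ℝ)/3)) * c +
      ∫ θ in a..s, (s - θ) ^ (-(1:ℝ)/3) * mlf (2/3) (2/3) (ρ * (s - θ) ^ ((2:ℝ)/3)) * θ =
    mildSol ρ a c s := by
  rw [integral_forcing ρ a hs, mlKernel_one_eq ρ, mildSol]
  ring

/-- The derivative of `mildSol ρ a c` to the right of `a`. -/
noncomputable def mildDeriv (ρ a c s : ℝ) : ℝ :=
  (ρ * c + a) * mlKernel ρ (2 / 3) (s - a) + mlKernel ρ (2 / 3 + 1) (s - a)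

theorem hasDerivAt_mildSol (ρ a c : ℝ) {s : ℝ} (hs : a < s) :
    HasDerivAt (mildSol ρ a c) (mildDeriv ρ a c s) s := by
  have hu : 0 < s - a := sub_pos.2 hs
  have h1 := (hasDerivAt_mlKernel ρ (β := 2 / 3) (by norm_num) hu).comp_sub_const s a
  have h2 := (hasDerivAt_mlKernel ρ (β := 2 / 3 + 1) (by norm_num) hu).comp_sub_const s a
  have e : (2 / 3 + 1 + 1 : ℝ) = 2 / 3 + 2 := by norm_num
  rw [e] at h2
  exact ((h1.const_mul (ρ * c + a)).const_add c).add h2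

theorem intervalIntegrable_mildDeriv (ρ a c : ℝ) {b : ℝ} (hb : a ≤ b) :
    IntervalIntegrable (mildDeriv ρ a c) volume a b := by
  have h (β : ℝ) (hβ : 0 < β) :
      IntervalIntegrable (fun s => mlKernel ρ β (s - a)) volume a b := by
    simpa using (intervalIntegrable_mlKernel ρ hβ (sub_nonneg.2 hb)).comp_sub_right a
  exact ((h _ (by norm_num)).const_mul _).add (h _ (by norm_num))

theorem intervalIntegrable_caputo_mildDeriv (ρ a c : ℝ) {t : ℝ} (ht : a < t) :
    IntervalIntegrable (fun s => (t - s) ^ (-(2:ℝ)/3) * mildDeriv ρ a c s) volume a t := by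
  have h (β : ℝ) (hβ : 0 < β) :
      IntervalIntegrable (fun s => (t - s) ^ (-(2:ℝ)/3) * mlKernel ρ β (s - a)) volume a t := by
    have := (intervalIntegrable_mlKernel_conv ρ (p := 1 / 3) hβ (by norm_num)
      (sub_pos.2 ht)).comp_sub_right a
    norm_num at this ⊢
    exact this
  refine (((h (2 / 3) (by norm_num)).const_mul (ρ * c + a)).add
    (h (2 / 3 + 1) (by norm_num))).congr fun s _ => ?_
  simp only [mildDeriv]
  ring

/-- `mildSol ρ a c` solves the Caputo equation of order `2/3` with base point `a` and forcing
`t ↦ t`. -/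
theorem caputo_mildSol (ρ a c : ℝ) {t : ℝ} (ht : a < t) :
    ∫ s in a..t, (t - s) ^ (-(2:ℝ)/3) * mildDeriv ρ a c s =
      Real.Gamma (1 / 3) * (ρ * mildSol ρ a c t + t) := by
  have hu := sub_pos.2 ht
  have i (β : ℝ) (hβ : 0 < β) := intervalIntegrable_mlKernel_conv ρ (p := 1 / 3) hβ
    (by norm_num) hu
  have v (β : ℝ) (hβ : 0 < β) := integral_mlKernel_conv ρ (p := 1 / 3) hβ (by norm_num) hu
  have hsub := intervalIntegral.integral_comp_sub_right (a := a) (b := t)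
    (fun v => (ρ * c + a) * ((t - a - v) ^ ((1 / 3 : ℝ) - 1) * mlKernel ρ (2 / 3) v) +
      (t - a - v) ^ ((1 / 3 : ℝ) - 1) * mlKernel ρ (2 / 3 + 1) v) a
  rw [sub_self, intervalIntegral.integral_add ((i _ (by norm_num)).const_mul _)
    (i _ (by norm_num)), intervalIntegral.integral_const_mul, v _ (by norm_num),
    v _ (by norm_num)] at hsub
  have k1 : mlKernel ρ (2 / 3 + 1 / 3) (t - a) = 1 + ρ * mlKernel ρ (2 / 3 + 1) (t - a) := by
    rw [← mlKernel_one_eq ρ]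
    norm_num [mlKernel]
  -- Integrating the previous identity over `[0, t - a]` gives the one for the next kernel.
  have k2 : mlKernel ρ (2 / 3 + 1 + 1 / 3) (t - a) =
      (t - a) + ρ * mlKernel ρ (2 / 3 + 2) (t - a) := by
    have e1 := integral_mlKernel_conv ρ (β := 1) (p := 1) one_pos one_pos hu
    have e2 := integral_mlKernel_conv ρ (β := 2 / 3 + 1) (p := 1) (by norm_num) one_pos hu
    simp only [sub_self, Real.rpow_zero, one_mul, Real.Gamma_one] at e1 e2
    have e3 : ∫ v in (0 : ℝ)..(t - a), mlKernel ρ 1 v =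
        ∫ v in (0 : ℝ)..(t - a), (1 + ρ * mlKernel ρ (2 / 3 + 1) v) := by
      refine intervalIntegral.integral_congr fun v _ => ?_
      rw [← mlKernel_one_eq ρ v]
      simp [mlKernel]
    rw [intervalIntegral.integral_add (by simp)
      ((intervalIntegrable_mlKernel ρ (by norm_num) hu.le).const_mul _),
      intervalIntegral.integral_const_mul, e1, e2, intervalIntegral.integral_const] at e3
    norm_num at e3 ⊢
    linarith
  rw [k1, k2] at hsub
  calc _ = ∫ s in a..t, ((ρ * c + a) * ((t - a - (s - a)) ^ ((1 / 3 : ℝ) - 1) *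
          mlKernel ρ (2 / 3) (s - a)) + (t - a - (s - a)) ^ ((1 / 3 : ℝ) - 1) *
          mlKernel ρ (2 / 3 + 1) (s - a)) := by
        refine intervalIntegral.integral_congr fun s _ => ?_
        simp only [mildDeriv]
        rw [sub_sub_sub_cancel_right, show (1 / 3 : ℝ) - 1 = -(2 : ℝ) / 3 by norm_num]
        ring
    _ = _ := hsub
    _ = _ := by rw [mildSol]; ring

theorem deriv_eq_mildDeriv {ρ a b c : ℝ} {x : ℝ → ℝ} (hx : ∀ s ∈ Ioo a b, x s = mildSol ρ a c s)
    {s : ℝ} (hs : s ∈ Ioo a b) : deriv x s = mildDeriv ρ a c s := by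
  refine ((hasDerivAt_mildSol ρ a c hs.1).congr_of_eventuallyEq ?_).deriv
  filter_upwards [isOpen_Ioo.mem_nhds hs] with w hw using hx w hw

/-- For the piecewise-defined function `x` built from the type-(1.2)
mild-solution formula for the impulsive equation of order `2/3`, one has, for
every `t ∈ (t₁,T]`,
`(1/Γ(1/3)) ∫_0^t (t−s)^{−2/3} x'(s) ds = ρ x(t) + t + H(t)`, where
`H(t) = (1/Γ(1/3)) ∫_0^{t₁} (t−s)^{−2/3} x'(s) ds`. -/
theorem caputo_piecewise_formula (ρ x₀ y₁ t₁ T : ℝ) (ht₁ : 0 < t₁) (hT : t₁ < T)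
    (x : ℝ → ℝ)
    (hx0 : ∀ t ∈ Set.Icc (0 : ℝ) t₁,
      x t = mlf (2/3) 1 (ρ * t ^ ((2:ℝ)/3)) * x₀ +
        ∫ θ in (0 : ℝ)..t,
          (t - θ) ^ (-(1:ℝ)/3) * mlf (2/3) (2/3) (ρ * (t - θ) ^ ((2:ℝ)/3)) * θ)
    (hx1 : ∀ t ∈ Set.Ioc t₁ T,
      x t = mlf (2/3) 1 (ρ * (t - t₁) ^ ((2:ℝ)/3)) * (x t₁ + y₁) +
        ∫ θ in t₁..t,
          (t - θ) ^ (-(1:ℝ)/3) * mlf (2/3) (2/3) (ρ * (t - θ) ^ ((2:ℝ)/3)) * θ) :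
    ∀ t ∈ Set.Ioc t₁ T,
      (1 / Real.Gamma (1/3)) *
          ∫ s in (0 : ℝ)..t, (t - s) ^ (-(2:ℝ)/3) * deriv x s =
        ρ * x t + t +
          (1 / Real.Gamma (1/3)) *
            ∫ s in (0 : ℝ)..t₁, (t - s) ^ (-(2:ℝ)/3) * deriv x s := by
  intro t ht
  have hs0 : ∀ s ∈ Ioo 0 t₁, x s = mildSol ρ 0 x₀ s := fun s hs => by
    rw [hx0 s ⟨hs.1.le, hs.2.le⟩, ← mildSol_eq ρ 0 x₀ hs.1.le, sub_zero]
  have hs1 : ∀ s ∈ Ioc t₁ T, x s = mildSol ρ t₁ (x t₁ + y₁) s := fun s hs => by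
    rw [hx1 s hs, ← mildSol_eq ρ t₁ (x t₁ + y₁) hs.1.le]
  have hae {a b c : ℝ} (hab : a ≤ b) (h : ∀ s ∈ Ioo a b, x s = mildSol ρ a c s) :
      ∀ᵐ s, s ∈ uIoc a b →
        (t - s) ^ (-(2:ℝ)/3) * mildDeriv ρ a c s = (t - s) ^ (-(2:ℝ)/3) * deriv x s := by
    filter_upwards [Measure.ae_ne volume b] with s hsb hs
    rw [uIoc_of_le hab] at hs
    rw [deriv_eq_mildDeriv h ⟨hs.1, lt_of_le_of_ne hs.2 hsb⟩]
  have hae0 := hae ht₁.le hs0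
  have hae1 := hae ht.1.le fun s hs => hs1 s ⟨hs.1, hs.2.le.trans ht.2⟩
  have hi0 : IntervalIntegrable (fun s => (t - s) ^ (-(2:ℝ)/3) * deriv x s) volume 0 t₁ := by
    -- On `[0, t₁]` the weight is continuous, because `t₁ < t`.
    have hc : ContinuousOn (fun s : ℝ => (t - s) ^ (-(2:ℝ)/3)) (uIcc 0 t₁) := by
      rw [uIcc_of_le ht₁.le]
      refine ContinuousOn.rpow_const (by fun_prop) fun s hs => Or.inl ?_
      linarith [hs.2, ht.1]
    exact ((intervalIntegrable_mildDeriv ρ 0 x₀ ht₁.le).continuousOn_mul hc).congr_ae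
      ((ae_restrict_iff' measurableSet_uIoc).2 hae0)
  have hi1 : IntervalIntegrable (fun s => (t - s) ^ (-(2:ℝ)/3) * deriv x s) volume t₁ t :=
    (intervalIntegrable_caputo_mildDeriv ρ t₁ _ ht.1).congr_ae
      ((ae_restrict_iff' measurableSet_uIoc).2 hae1)
  rw [← intervalIntegral.integral_add_adjacent_intervals hi0 hi1,
    ← intervalIntegral.integral_congr_ae hae1, caputo_mildSol ρ t₁ _ ht.1, ← hs1 t ht]
  have := (Real.Gamma_pos_of_pos (show (0 : ℝ) < 1 / 3 by norm_num)).ne'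
  field_simp
  ring
end
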